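/- arXiv:2203.08767 — 3 statements merged into one kernel-verified Lean document; each statement's English description precedes it below -/
import Mathlib

section
/- Fix 0 < R < Q and s > 0. Let A_{R,Q} = {p ∈ ℝ² : R ≤ ‖p‖ ≤ Q} and define γ : (0,∞) → ℝ by γ(c) = vol(A_{R,Q} ∩ B(p_c,s)). For r ∈ {R,Q} define y_r(c) to be the maximum of the second coordinates of points of C(O,r) ∩ C(p_c,s) if this intersection is nonempty, and y_r(c) = 0 otherwise. Then for every c > 0, γ has derivative 2·y_R(c) − 2·y_Q(c) at c. -/
open Set MeasureTheory Metric
open scoped Classical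

/-- The point `(c, 0)` in the Euclidean plane. -/
noncomputable def pc (c : ℝ) : EuclideanSpace ℝ (Fin 2) :=
  (WithLp.equiv 2 (Fin 2 → ℝ)).symm ![c, 0]

/-!
Slice the moving ball by the horizontal lines. The slice at height `y` is an interval of fixed
half-length `√(s² - y²)` centred at `c`, so for any set `D` whose frontier the end points avoid at
almost every height, the derivative of `vol (D ∩ B(p_c, s))` is the measure of the heights at which
the right end point lies in `D` minus the measure of those at which the left one does.

For `c > 0` and `D` the disc of radius `r` about the origin, a point of `C(p_c, s)` lies in `D`
according to its side of the radical axis of the two circles. Hence, up to null sets, the end points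
contribute differently exactly at the heights with `|y| < y_r(c)`, where only the left one lies in
`D`, and the derivative is `-2 y_r(c)`. The annulus is a difference of two such discs.
-/

local notation "ℝ²" => EuclideanSpace ℝ (Fin 2)

section Line

variable {A : Set ℝ} {a b c : ℝ}

lemma intervalIntegrable_indicator_one (hA : MeasurableSet A) :
    IntervalIntegrable (A.indicator (1 : ℝ → ℝ)) volume a b :=
  intervalIntegrable_iff.2 ((integrableOn_const (C := (1 : ℝ)) measure_Ioc_lt_top.ne).indicator hA)

lemma volume_real_inter_Ioo_eq_sub (hA : MeasurableSet A) (hab : a ≤ b) :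
    volume.real (A ∩ Ioo a b) =
      (∫ x in 0..b, A.indicator 1 x) - ∫ x in 0..a, A.indicator (1 : ℝ → ℝ) x := by
  rw [intervalIntegral.integral_interval_sub_left (intervalIntegrable_indicator_one hA)
    (intervalIntegrable_indicator_one hA), intervalIntegral.integral_of_le hab,
    integral_Ioc_eq_integral_Ioo, integral_indicator_one hA, measureReal_restrict_apply hA]

lemma lipschitzWith_integral_indicator_one (hA : MeasurableSet A) :
    LipschitzWith 1 (fun t ↦ ∫ x in 0..t, A.indicator (1 : ℝ → ℝ) x) := by
  refine LipschitzWith.of_dist_le_mul fun t u ↦ ?_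
  rw [Real.dist_eq, Real.dist_eq, intervalIntegral.integral_interval_sub_left
    (intervalIntegrable_indicator_one hA) (intervalIntegrable_indicator_one hA)]
  have hle (x : ℝ) : ‖A.indicator (1 : ℝ → ℝ) x‖ ≤ 1 :=
    (norm_indicator_le_norm_self _ x).trans_eq norm_one
  exact intervalIntegral.norm_integral_le_of_norm_le_const fun x _ ↦ hle x

lemma lipschitzWith_volume_real_inter_Ioo_sub_add (hA : MeasurableSet A) (hb : 0 ≤ b) :
    LipschitzWith 2 (fun c ↦ volume.real (A ∩ Ioo (c - b) (c + b))) := by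
  have hG := lipschitzWith_integral_indicator_one hA
  simp_rw [fun c ↦ volume_real_inter_Ioo_eq_sub hA (show c - b ≤ c + b by linarith)]
  have h := (hG.comp (LipschitzWith.id.add (LipschitzWith.const b))).sub
    (hG.comp (LipschitzWith.id.sub (LipschitzWith.const b)))
  exact h.weaken (by norm_num)

lemma hasDerivAt_integral_indicator_one (hA : MeasurableSet A) (hc : c ∉ frontier A) :
    HasDerivAt (fun t ↦ ∫ x in 0..t, A.indicator (1 : ℝ → ℝ) x) (A.indicator 1 c) c :=
  intervalIntegral.integral_hasDerivAt_right (intervalIntegrable_indicator_one hA)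
    ((measurable_one.indicator hA).stronglyMeasurable.stronglyMeasurableAtFilter)
    (continuousOn_const.continuousAt_indicator hc)

lemma hasDerivAt_volume_real_inter_Ioo_sub_add (hA : MeasurableSet A) (hb : 0 ≤ b)
    (hright : c + b ∉ frontier A) (hleft : c - b ∉ frontier A) :
    HasDerivAt (fun c ↦ volume.real (A ∩ Ioo (c - b) (c + b)))
      (A.indicator 1 (c + b) - A.indicator 1 (c - b)) c := by
  simp_rw [fun c ↦ volume_real_inter_Ioo_eq_sub hA (show c - b ≤ c + b by linarith)]
  exact ((hasDerivAt_integral_indicator_one hA hright).comp_add_const c b).sub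
    ((hasDerivAt_integral_indicator_one hA hleft).comp_sub_const c b)

end Line

section RegionBetween

variable {α : Type*} [MeasurableSpace α] {μ : Measure α} {S : Set α} {T : Set (α × ℝ)}
  {f g b : α → ℝ}

lemma measurable_volume_section_inter_Ioo (hT : MeasurableSet T) (hf : Measurable f)
    (hg : Measurable g) :
    Measurable fun y ↦ volume (Prod.mk y ⁻¹' T ∩ Ioo (f y) (g y)) := by
  have h := measurable_measure_prodMk_left (ν := volume)
    (hT.inter (measurableSet_regionBetween hf hg MeasurableSet.univ))
  simpa [regionBetween, preimage_inter, ← Ioo_def] using! h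

lemma measureReal_prod_inter_regionBetween [SFinite μ] (hT : MeasurableSet T) (hf : Measurable f)
    (hg : Measurable g) (hS : MeasurableSet S) :
    (μ.prod volume).real (T ∩ regionBetween f g S) =
      ∫ y in S, volume.real (Prod.mk y ⁻¹' T ∩ Ioo (f y) (g y)) ∂μ := by
  have hsection : ∀ y, volume (Prod.mk y ⁻¹' (T ∩ regionBetween f g S)) =
      S.indicator (fun y ↦ volume (Prod.mk y ⁻¹' T ∩ Ioo (f y) (g y))) y := by
    intro y
    by_cases hy : y ∈ S <;> simp [hy, regionBetween, ← Ioo_def]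
  rw [measureReal_def, Measure.prod_apply (hT.inter (measurableSet_regionBetween hf hg hS)),
    lintegral_congr hsection, lintegral_indicator hS]
  exact (integral_toReal (measurable_volume_section_inter_Ioo hT hf hg).aemeasurable
    (.of_forall fun y ↦ (measure_mono inter_subset_right).trans_lt measure_Ioo_lt_top)).symm

theorem hasDerivAt_measureReal_prod_inter_regionBetween [SFinite μ] {c : ℝ}
    (hT : MeasurableSet T) (hS : MeasurableSet S) (hμS : μ S ≠ ⊤) (hb : Measurable b)
    (hb_int : IntegrableOn b S μ) (hb_nonneg : ∀ y ∈ S, 0 ≤ b y)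
    (hfrontier : ∀ᵐ y ∂μ.restrict S, c + b y ∉ frontier (Prod.mk y ⁻¹' T) ∧
      c - b y ∉ frontier (Prod.mk y ⁻¹' T)) :
    HasDerivAt
      (fun c ↦ (μ.prod volume).real
        (T ∩ regionBetween (fun y ↦ c - b y) (fun y ↦ c + b y) S))
      (∫ y in S, (T.indicator 1 (y, c + b y) - T.indicator 1 (y, c - b y)) ∂μ) c := by
  have hmeas (c : ℝ) : AEStronglyMeasurable
      (fun y ↦ volume.real (Prod.mk y ⁻¹' T ∩ Ioo (c - b y) (c + b y))) (μ.restrict S) :=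
    (measurable_volume_section_inter_Ioo hT (hb.const_sub c)
      (hb.const_add c)).ennreal_toReal.aestronglyMeasurable
  have hsection (y : α) : MeasurableSet (Prod.mk y ⁻¹' T) := measurable_prodMk_left hT
  simp_rw [fun c ↦ measureReal_prod_inter_regionBetween (μ := μ) hT (hb.const_sub c)
    (hb.const_add c) hS]
  refine (hasDerivAt_integral_of_dominated_loc_of_lip (bound := fun _ ↦ 2)
    Filter.univ_mem (.of_forall hmeas) ?_ ?_ ?_ (integrableOn_const hμS) ?_).2
  · refine (hb_int.const_mul 2).mono' (hmeas c) ?_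
    filter_upwards [ae_restrict_mem hS] with y hy
    calc ‖volume.real (Prod.mk y ⁻¹' T ∩ Ioo (c - b y) (c + b y))‖
        = volume.real (Prod.mk y ⁻¹' T ∩ Ioo (c - b y) (c + b y)) :=
          Real.norm_of_nonneg measureReal_nonneg
      _ ≤ volume.real (Ioo (c - b y) (c + b y)) :=
          measureReal_mono inter_subset_right measure_Ioo_lt_top.ne
      _ = 2 * b y := by
        rw [Real.volume_real_Ioo_of_le (by linarith [hb_nonneg y hy])]
        ring
  · have hind : Measurable (T.indicator (1 : α × ℝ → ℝ)) := measurable_one.indicator hT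
    exact ((hind.comp (measurable_id.prodMk (hb.const_add c))).sub
      (hind.comp (measurable_id.prodMk (hb.const_sub c)))).aestronglyMeasurable
  · filter_upwards [ae_restrict_mem hS] with y hy
    rw [show Real.nnabs 2 = 2 from NNReal.eq abs_two]
    exact
      (lipschitzWith_volume_real_inter_Ioo_sub_add (hsection y) (hb_nonneg y hy)).lipschitzOnWith
  · filter_upwards [ae_restrict_mem hS, hfrontier] with y hy hyT
    exact hasDerivAt_volume_real_inter_Ioo_sub_add (hsection y) (hb_nonneg y hy) hyT.1 hyT.2

end RegionBetween

lemma measureReal_annulus_inter {E : Type*} [NormedAddCommGroup E] [NormedSpace ℝ E]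
    [FiniteDimensional ℝ E] [MeasurableSpace E] [BorelSpace E] (μ : Measure E) [μ.IsAddHaarMeasure]
    {R Q : ℝ} (hR : R ≠ 0) (hRQ : R ≤ Q) {B : Set E} (hB : MeasurableSet B) :
    μ.real ({p | R ≤ ‖p‖ ∧ ‖p‖ ≤ Q} ∩ B) =
      μ.real (closedBall 0 Q ∩ B) - μ.real (closedBall 0 R ∩ B) := by
  have hannulus : {p : E | R ≤ ‖p‖ ∧ ‖p‖ ≤ Q} ∩ B = (closedBall 0 Q ∩ B) \ (ball 0 R ∩ B) := by
    ext p
    simp only [mem_inter_iff, mem_ofPred_eq, mem_sdiff, mem_closedBall_zero_iff,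
      mem_ball_zero_iff, ← not_lt (a := ‖p‖)]
    tauto
  have hae : (closedBall (0 : E) R : Set E) =ᵐ[μ] ball 0 R := by
    rw [← ball_union_sphere]
    exact union_ae_eq_left_of_ae_eq_empty (ae_eq_empty.2 (Measure.addHaar_sphere_of_ne_zero μ 0 hR))
  have hsub : ball (0 : E) R ∩ B ⊆ closedBall 0 Q ∩ B :=
    inter_subset_inter_left B (ball_subset_closedBall.trans (closedBall_subset_closedBall hRQ))
  rw [hannulus, measureReal_sdiff hsub (measurableSet_ball.inter hB)
    (measure_ne_top_of_subset inter_subset_left measure_closedBall_lt_top.ne),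
    measureReal_congr (hae.inter (ae_eq_refl B))]

lemma sSup_ofPred_sq_eq (t : ℝ) : sSup {y : ℝ | y ^ 2 = t} = √t := by
  rcases lt_or_ge t 0 with ht | ht
  · have hempty : {y : ℝ | y ^ 2 = t} = ∅ :=
      eq_empty_of_forall_notMem fun y hy ↦ (ht.trans_le (sq_nonneg y)).ne' hy
    rw [hempty, Real.sSup_empty, Real.sqrt_eq_zero_of_nonpos ht.le]
  · exact IsGreatest.csSup_eq ⟨Real.sq_sqrt ht, fun y hy ↦ Real.le_sqrt_of_sq_le (le_of_eq hy)⟩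

lemma ae_sq_ne (t : ℝ) : ∀ᵐ y : ℝ, y ^ 2 ≠ t := by
  have hfinite : {y : ℝ | y ^ 2 = t}.Finite := by
    refine (toFinite {√t, -√t}).subset fun y hy ↦ ?_
    rw [← mem_ofPred_eq.mp hy, Real.sqrt_sq_eq_abs]
    exact eq_or_eq_neg_of_abs_eq rfl
  exact hfinite.countable.ae_notMem _

lemma setIntegral_indicator_sq_lt {s t : ℝ} (hs : 0 ≤ s) (ht : t ≤ s ^ 2) :
    ∫ y in Ioo (-s) s, {y : ℝ | y ^ 2 < t}.indicator (1 : ℝ → ℝ) y = 2 * √t := by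
  have hball : {y : ℝ | y ^ 2 < t} = ball 0 √t := by
    ext y
    rw [mem_ball_zero_iff, Real.norm_eq_abs, Real.lt_sqrt (abs_nonneg y), sq_abs, mem_ofPred_eq]
  have hsub : ball 0 √t ⊆ Ioo (-s) s := by
    rw [Real.ball_eq_Ioo, zero_sub, zero_add]
    have hts : √t ≤ s := Real.sqrt_le_iff.2 ⟨hs, ht⟩
    exact Ioo_subset_Ioo (neg_le_neg hts) hts
  rw [hball, integral_indicator_one measurableSet_ball, measureReal_restrict_apply
    measurableSet_ball, inter_eq_left.2 hsub, Real.volume_real_ball (Real.sqrt_nonneg t)]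

section Plane

lemma measurePreserving_toLp_swap : MeasurePreserving (fun q : ℝ × ℝ ↦ (!₂[q.2, q.1] : ℝ²)) :=
  (PiLp.volume_preserving_toLp (Fin 2)).comp
    ((volume_preserving_finTwoArrow ℝ).symm.comp Measure.measurePreserving_swap)

lemma dist_pc_sq (p : ℝ²) (c : ℝ) : dist p (pc c) ^ 2 = (p 0 - c) ^ 2 + p 1 ^ 2 := by
  simp [EuclideanSpace.dist_sq_eq, Fin.sum_univ_two, Real.dist_eq, pc]

lemma preimage_ball_pc_eq_regionBetween {s : ℝ} (hs : 0 ≤ s) (c : ℝ) :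
    (fun q : ℝ × ℝ ↦ (!₂[q.2, q.1] : ℝ²)) ⁻¹' ball (pc c) s =
      regionBetween (fun y ↦ c - √(s ^ 2 - y ^ 2)) (fun y ↦ c + √(s ^ 2 - y ^ 2))
        (Ioo (-s) s) := by
  ext ⟨y, x⟩
  have hx : x ∈ Ioo (c - √(s ^ 2 - y ^ 2)) (c + √(s ^ 2 - y ^ 2)) ↔
      (x - c) ^ 2 + y ^ 2 < s ^ 2 := by
    rw [← Real.ball_eq_Ioo, mem_ball, Real.dist_eq, Real.lt_sqrt (abs_nonneg _), sq_abs,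
      lt_sub_iff_add_lt]
  have hy (h : (x - c) ^ 2 + y ^ 2 < s ^ 2) : y ∈ Ioo (-s) s :=
    abs_lt.1 (abs_lt_of_sq_lt_sq (by nlinarith [sq_nonneg (x - c)]) hs)
  rw [mem_preimage, mem_ball, ← sq_lt_sq₀ dist_nonneg hs, dist_pc_sq]
  exact ⟨fun h ↦ ⟨hy h, hx.2 h⟩, fun h ↦ hx.1 h.2⟩

theorem hasDerivAt_volume_real_inter_ball_pc {D : Set ℝ²} {s c : ℝ}
    (hD : MeasurableSet D) (hs : 0 ≤ s)
    (hfrontier : ∀ᵐ y ∂volume.restrict (Ioo (-s) s),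
      !₂[c + √(s ^ 2 - y ^ 2), y] ∉ frontier D ∧ !₂[c - √(s ^ 2 - y ^ 2), y] ∉ frontier D) :
    HasDerivAt (fun c ↦ volume.real (D ∩ ball (pc c) s))
      (∫ y in Ioo (-s) s, (D.indicator 1 !₂[c + √(s ^ 2 - y ^ 2), y] -
        D.indicator 1 !₂[c - √(s ^ 2 - y ^ 2), y])) c := by
  have hφ := measurePreserving_toLp_swap
  have hvol (c : ℝ) := hφ.measureReal_preimage
    (hD.inter (measurableSet_ball (x := pc c) (ε := s))).nullMeasurableSet
  simp_rw [← hvol, preimage_inter, preimage_ball_pc_eq_regionBetween hs]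
  have hb : Continuous fun y : ℝ ↦ √(s ^ 2 - y ^ 2) := by fun_prop
  refine hasDerivAt_measureReal_prod_inter_regionBetween (hφ.measurable hD) measurableSet_Ioo
    (by simp) hb.measurable (hb.integrableOn_Icc.mono_set Ioo_subset_Icc_self)
    (fun y _ ↦ Real.sqrt_nonneg _) ?_
  filter_upwards [hfrontier] with y hy
  have hline : Continuous fun x : ℝ ↦ (!₂[x, y] : ℝ²) := by fun_prop
  exact ⟨fun h ↦ hy.1 (hline.frontier_preimage_subset D h),
    fun h ↦ hy.2 (hline.frontier_preimage_subset D h)⟩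

end Plane

section TwoCircles

variable {r s c : ℝ} {p : ℝ²}

/-- The signed distance, measured from `(c, 0)` towards the origin, of the radical axis of the
circles of radius `r` about the origin and of radius `s` about `(c, 0)`. -/
noncomputable def radicalOffset (r s c : ℝ) : ℝ := (c ^ 2 + s ^ 2 - r ^ 2) / (2 * c)

/-- The squared half-length of the common chord of the circles of radius `r` about the origin and
of radius `s` about `(c, 0)`. For `c ≠ 0` and `r, s ≥ 0` it is negative exactly when
the circles do not meet. -/
noncomputable def halfChordSq (r s c : ℝ) : ℝ := s ^ 2 - radicalOffset r s c ^ 2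

lemma halfChordSq_le_sq (r s c : ℝ) : halfChordSq r s c ≤ s ^ 2 :=
  sub_le_self _ (sq_nonneg _)

lemma norm_sq_sub_sq_of_mem_sphere_pc (hc : c ≠ 0) (hp : p ∈ sphere (pc c) s) :
    ‖p‖ ^ 2 - r ^ 2 = 2 * c * (radicalOffset r s c - (c - p 0)) := by
  have hdist := dist_pc_sq p c
  rw [mem_sphere.1 hp] at hdist
  rw [EuclideanSpace.real_norm_sq_eq, Fin.sum_univ_two, radicalOffset]
  field_simp
  linarith

lemma norm_le_iff_of_mem_sphere_pc (hr : 0 ≤ r) (hc : 0 < c) (hp : p ∈ sphere (pc c) s) :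
    ‖p‖ ≤ r ↔ radicalOffset r s c ≤ c - p 0 := by
  rw [← sq_le_sq₀ (norm_nonneg p) hr, ← sub_nonpos, norm_sq_sub_sq_of_mem_sphere_pc hc.ne' hp,
    ← smul_eq_mul, smul_nonpos_iff_nonpos_of_pos_left (by positivity), sub_nonpos]

lemma norm_eq_iff_of_mem_sphere_pc (hr : 0 ≤ r) (hc : c ≠ 0) (hp : p ∈ sphere (pc c) s) :
    ‖p‖ = r ↔ p 0 = c - radicalOffset r s c := by
  rw [← sq_eq_sq₀ (norm_nonneg p) hr, ← sub_eq_zero, norm_sq_sub_sq_of_mem_sphere_pc hc hp,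
    mul_eq_zero_iff_left (by simpa using hc), sub_eq_zero]
  constructor <;> intro h <;> linarith

lemma mem_sphere_pc_iff (hs : 0 ≤ s) :
    p ∈ sphere (pc c) s ↔ (p 0 - c) ^ 2 + p 1 ^ 2 = s ^ 2 := by
  rw [mem_sphere, ← sq_eq_sq₀ dist_nonneg hs, dist_pc_sq]

lemma mem_sphere_inter_sphere_pc_iff (hr : 0 ≤ r) (hs : 0 ≤ s) (hc : c ≠ 0) :
    p ∈ sphere 0 r ∩ sphere (pc c) s ↔
      p 0 = c - radicalOffset r s c ∧ p 1 ^ 2 = halfChordSq r s c := by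
  rw [mem_inter_iff, mem_sphere_zero_iff_norm,
    and_congr_left fun h ↦ norm_eq_iff_of_mem_sphere_pc hr hc h, mem_sphere_pc_iff hs, halfChordSq]
  refine and_congr_right fun h0 ↦ ?_
  rw [h0, eq_sub_iff_add_eq, add_comm]
  ring_nf

lemma sSup_height_sphere_inter_sphere_pc (hr : 0 ≤ r) (hs : 0 ≤ s) (hc : c ≠ 0) :
    sSup ((fun p : ℝ² ↦ p 1) '' (sphere 0 r ∩ sphere (pc c) s)) = √(halfChordSq r s c) := by
  rw [← sSup_ofPred_sq_eq]
  congr 1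
  ext y
  simp only [mem_image, mem_sphere_inter_sphere_pc_iff hr hs hc, mem_ofPred_eq]
  constructor
  · rintro ⟨p, ⟨-, hp⟩, rfl⟩
    exact hp
  · exact fun hy ↦ ⟨!₂[c - radicalOffset r s c, y], by simpa using hy, by simp⟩

lemma ite_sSup_height_sphere_inter_sphere_pc (hr : 0 ≤ r) (hs : 0 ≤ s) (hc : c ≠ 0) :
    (if (sphere (0 : ℝ²) r ∩ sphere (pc c) s).Nonempty then
      sSup ((fun p : ℝ² ↦ p 1) '' (sphere 0 r ∩ sphere (pc c) s))
    else 0) = √(halfChordSq r s c) := by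
  rw [← sSup_height_sphere_inter_sphere_pc hr hs hc]
  split_ifs with h
  · rfl
  · rw [not_nonempty_iff_eq_empty.1 h, image_empty, Real.sSup_empty]

lemma add_sqrt_mem_sphere_pc {y : ℝ} (hs : 0 ≤ s) (hy : y ^ 2 ≤ s ^ 2) (c : ℝ) :
    !₂[c + √(s ^ 2 - y ^ 2), y] ∈ sphere (pc c) s := by
  rw [mem_sphere_pc_iff hs]
  simp [Real.sq_sqrt (sub_nonneg.2 hy)]

lemma sub_sqrt_mem_sphere_pc {y : ℝ} (hs : 0 ≤ s) (hy : y ^ 2 ≤ s ^ 2) (c : ℝ) :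
    !₂[c - √(s ^ 2 - y ^ 2), y] ∈ sphere (pc c) s := by
  rw [mem_sphere_pc_iff hs]
  simp [Real.sq_sqrt (sub_nonneg.2 hy)]

lemma indicator_closedBall_sub_indicator_closedBall {y : ℝ} (hr : 0 ≤ r) (hs : 0 ≤ s)
    (hc : 0 < c) (hy : y ^ 2 ≤ s ^ 2) (hne : y ^ 2 ≠ halfChordSq r s c) :
    (closedBall (0 : ℝ²) r).indicator (1 : ℝ² → ℝ) !₂[c + √(s ^ 2 - y ^ 2), y] -
      (closedBall (0 : ℝ²) r).indicator 1 !₂[c - √(s ^ 2 - y ^ 2), y] =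
      -{y | y ^ 2 < halfChordSq r s c}.indicator 1 y := by
  have hright : !₂[c + √(s ^ 2 - y ^ 2), y] ∈ closedBall (0 : ℝ²) r ↔
      √(s ^ 2 - y ^ 2) ≤ -radicalOffset r s c := by
    rw [mem_closedBall_zero_iff,
      norm_le_iff_of_mem_sphere_pc hr hc (add_sqrt_mem_sphere_pc hs hy c)]
    simp [le_neg]
  have hleft : !₂[c - √(s ^ 2 - y ^ 2), y] ∈ closedBall (0 : ℝ²) r ↔
      radicalOffset r s c ≤ √(s ^ 2 - y ^ 2) := by
    rw [mem_closedBall_zero_iff,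
      norm_le_iff_of_mem_sphere_pc hr hc (sub_sqrt_mem_sphere_pc hs hy c)]
    simp
  have hchord : y ^ 2 < halfChordSq r s c ↔ |radicalOffset r s c| < √(s ^ 2 - y ^ 2) := by
    rw [Real.lt_sqrt (abs_nonneg _), sq_abs, halfChordSq, lt_sub_comm]
  have habs : |radicalOffset r s c| ≠ √(s ^ 2 - y ^ 2) := by
    intro h
    rw [← Real.sqrt_sq_eq_abs, Real.sqrt_inj (sq_nonneg _) (sub_nonneg.2 hy)] at h
    exact hne (by rw [halfChordSq, h, sub_sub_cancel])
  have hnonneg := Real.sqrt_nonneg (s ^ 2 - y ^ 2)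
  simp only [indicator_apply, hright, hleft, mem_ofPred_eq, hchord, Pi.one_apply]
  rcases habs.lt_or_gt with hlt | hgt
  · obtain ⟨hneg, hpos⟩ := abs_lt.1 hlt
    simp [hlt, hpos.le, (neg_lt.1 hneg).not_ge]
  rcases lt_abs.1 hgt with hpos | hneg
  · simp [hgt.not_gt, hpos.not_ge, show ¬ √(s ^ 2 - y ^ 2) ≤ -radicalOffset r s c by linarith]
  · simp [hgt.not_gt, hneg.le, show radicalOffset r s c ≤ √(s ^ 2 - y ^ 2) by linarith]

theorem hasDerivAt_volume_real_closedBall_inter_ball_pc (hr : 0 < r) (hs : 0 ≤ s) (hc : 0 < c) :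
    HasDerivAt (fun c ↦ volume.real (closedBall 0 r ∩ ball (pc c) s))
      (-(2 * √(halfChordSq r s c))) c := by
  have hgeneric : ∀ᵐ y ∂volume.restrict (Ioo (-s) s),
      y ^ 2 ≤ s ^ 2 ∧ y ^ 2 ≠ halfChordSq r s c := by
    filter_upwards [ae_restrict_mem measurableSet_Ioo, ae_restrict_of_ae (ae_sq_ne _)]
      with y hy hne using ⟨(sq_lt_sq' hy.1 hy.2).le, hne⟩
  have hnotMem {p : ℝ²} (hp : p ∈ sphere (pc c) s) (hne : p 1 ^ 2 ≠ halfChordSq r s c) :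
      p ∉ frontier (closedBall 0 r) := by
    rw [frontier_closedBall 0 hr.ne']
    exact fun h ↦ hne ((mem_sphere_inter_sphere_pc_iff hr.le hs hc.ne').1 ⟨h, hp⟩).2
  have hintegral : ∫ y in Ioo (-s) s,
      ((closedBall (0 : ℝ²) r).indicator (1 : ℝ² → ℝ) !₂[c + √(s ^ 2 - y ^ 2), y] -
        (closedBall (0 : ℝ²) r).indicator 1 !₂[c - √(s ^ 2 - y ^ 2), y]) =
      -(2 * √(halfChordSq r s c)) := by
    rw [← setIntegral_indicator_sq_lt hs (halfChordSq_le_sq r s c), ← integral_neg]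
    refine integral_congr_ae ?_
    filter_upwards [hgeneric] with y hy using
      indicator_closedBall_sub_indicator_closedBall hr.le hs hc hy.1 hy.2
  rw [← hintegral]
  refine hasDerivAt_volume_real_inter_ball_pc measurableSet_closedBall hs ?_
  filter_upwards [hgeneric] with y hy
  exact ⟨hnotMem (add_sqrt_mem_sphere_pc hs hy.1 c) (by simpa using hy.2),
    hnotMem (sub_sqrt_mem_sphere_pc hs hy.1 c) (by simpa using hy.2)⟩

end TwoCircles

/-- With `γ c = vol(A_{R,Q} ∩ B((c,0),s))` and, for `r ∈ {R,Q}`, `y_r c` the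
maximal second coordinate of a point of `C(O,r) ∩ C((c,0),s)` (or `0` if the intersection is
empty), `γ` has derivative `2 * y_R c - 2 * y_Q c` at every `c > 0`. -/
theorem gamma_hasDerivAt
    (R Q s : ℝ) (hR : 0 < R) (hRQ : R < Q) (hs : 0 < s)
    (γ yR yQ : ℝ → ℝ)
    (hγ : ∀ c, γ c =
      (volume ({p : EuclideanSpace ℝ (Fin 2) | R ≤ ‖p‖ ∧ ‖p‖ ≤ Q} ∩ ball (pc c) s)).toReal)
    (hyR : ∀ c, yR c =
      if (sphere (0 : EuclideanSpace ℝ (Fin 2)) R ∩ sphere (pc c) s).Nonempty then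
        sSup ((fun p : EuclideanSpace ℝ (Fin 2) => p 1) ''
          (sphere (0 : EuclideanSpace ℝ (Fin 2)) R ∩ sphere (pc c) s))
      else 0)
    (hyQ : ∀ c, yQ c =
      if (sphere (0 : EuclideanSpace ℝ (Fin 2)) Q ∩ sphere (pc c) s).Nonempty then
        sSup ((fun p : EuclideanSpace ℝ (Fin 2) => p 1) ''
          (sphere (0 : EuclideanSpace ℝ (Fin 2)) Q ∩ sphere (pc c) s))
      else 0) :
    ∀ c, 0 < c → HasDerivAt γ (2 * yR c - 2 * yQ c) c := by
  intro c hc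
  have hγ_sub : γ = fun c ↦ volume.real (closedBall 0 Q ∩ ball (pc c) s) -
      volume.real (closedBall 0 R ∩ ball (pc c) s) := by
    funext c
    rw [hγ, ← measureReal_annulus_inter volume hR.ne' hRQ.le measurableSet_ball, measureReal_def]
  have hQ : 0 < Q := hR.trans hRQ
  rw [hγ_sub, hyR, hyQ, ite_sSup_height_sphere_inter_sphere_pc hR.le hs.le hc.ne',
    ite_sSup_height_sphere_inter_sphere_pc hQ.le hs.le hc.ne']
  refine ((hasDerivAt_volume_real_closedBall_inter_ball_pc hQ hs.le hc).sub
    (hasDerivAt_volume_real_closedBall_inter_ball_pc hR hs.le hc)).congr_deriv ?_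
  ring
end

section
/- Fix 0 < R < Q and s > 0. Let A_{R,Q} = {p ∈ ℝ² : R ≤ ‖p‖ ≤ Q} and define γ : (0,∞) → ℝ by γ(c) = vol(A_{R,Q} ∩ B(p_c,s)). Suppose c > 0 satisfies c + s > Q, s − c < R, and c − s < R. Then: γ′(c) = 0 if and only if c² + s² = (R² + Q²)/2; γ′(c) > 0 if and only if c² + s² < (R² + Q²)/2; and γ′(c) < 0 if and only if c² + s² > (R² + Q²)/2, where γ′(c) denotes the derivative of γ at c (which exists). -/
open Set MeasureTheory Metric

/-! The annulus is, up to a null set, the difference of two discs centred at `O`, so `γ c` is a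
difference of two lens areas. The common chord of `C(O,r)` and `C(p_c,s)` cuts the lens into a
segment of each disc. Each segment area decreases at the rate of the chord length times the growth
of the signed distance from the centre to the chord, and these two distances add up to `c`; hence
the lens area has derivative minus the length of the common chord. The sign of the derivative of `γ`
is thus found by comparing the chords for `r = R` and `r = Q`, which Heron's formula makes
explicit. -/

open scoped Topology

section Annulus

variable {E : Type*} [NormedAddCommGroup E] [NormedSpace ℝ E] [FiniteDimensional ℝ E]
  [Nontrivial E] [MeasurableSpace E] [BorelSpace E] (μ : Measure E) [μ.IsAddHaarMeasure]

lemma annulus_ae_eq_ball_sdiff_ball (R Q : ℝ) :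
    {p : E | R ≤ ‖p‖ ∧ ‖p‖ ≤ Q} =ᵐ[μ] (ball 0 Q \ ball 0 R : Set E) := by
  have hannulus : {p : E | R ≤ ‖p‖ ∧ ‖p‖ ≤ Q} = closedBall 0 Q \ ball 0 R := by
    ext p
    simp [and_comm]
  have hball : (ball 0 Q : Set E) =ᵐ[μ] closedBall 0 Q :=
    ae_eq_of_subset_of_measure_ge ball_subset_closedBall
      (Measure.addHaar_closedBall_eq_addHaar_ball μ 0 Q).le
      measurableSet_ball.nullMeasurableSet measure_closedBall_lt_top.ne
  rw [hannulus]
  exact hball.symm.diff (ae_eq_refl _)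

lemma measureReal_annulus_inter_s5 {R Q : ℝ} (hRQ : R ≤ Q) (B : Set E) :
    μ.real ({p : E | R ≤ ‖p‖ ∧ ‖p‖ ≤ Q} ∩ B) =
      μ.real (ball 0 Q ∩ B) - μ.real (ball 0 R ∩ B) := by
  have hfinite : μ (ball 0 Q ∩ B) ≠ ⊤ :=
    measure_ne_top_of_subset inter_subset_left measure_ball_ne_top
  have hinter : ball 0 Q ∩ B ∩ ball 0 R = ball 0 R ∩ B := by
    rw [inter_right_comm, inter_eq_self_of_subset_right (ball_subset_ball hRQ)]
  have hsdiff : (ball 0 Q ∩ B) \ ball 0 R = (ball 0 Q \ ball 0 R) ∩ B :=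
    inter_sdiff_right_comm
  rw [measureReal_congr ((annulus_ae_eq_ball_sdiff_ball μ R Q).inter (ae_eq_refl B)), ← hsdiff,
    ← hinter, ← measureReal_inter_add_sdiff measurableSet_ball hfinite, add_sub_cancel_left]

end Annulus

lemma volume_real_setOf_abs_lt {f : ℝ → ℝ} {S : Set ℝ} (hS : MeasurableSet S)
    (hf : IntegrableOn f S) (hf₀ : ∀ t ∈ S, 0 ≤ f t) :
    volume.real {p : EuclideanSpace ℝ (Fin 2) | p 0 ∈ S ∧ |p 1| < f (p 0)} =
      ∫ t in S, 2 * f t := by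
  let e : EuclideanSpace ℝ (Fin 2) ≃ᵐ ℝ × ℝ :=
    (MeasurableEquiv.toLp 2 (Fin 2 → ℝ)).symm.trans MeasurableEquiv.finTwoArrow
  have he : MeasurePreserving e :=
    (volume_preserving_finTwoArrow ℝ).comp
      (EuclideanSpace.volume_preserving_symm_measurableEquiv_toLp (Fin 2))
  have hpreimage : {p : EuclideanSpace ℝ (Fin 2) | p 0 ∈ S ∧ |p 1| < f (p 0)} =
      e ⁻¹' regionBetween (-f) f S := by
    ext p
    simp only [mem_ofPred_eq, abs_lt]
    rfl
  have hwidth : f - -f = fun t ↦ 2 * f t := by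
    rw [sub_neg_eq_add, ← two_mul]
    rfl
  rw [hpreimage, measureReal_def, he.measure_preimage_equiv, Measure.volume_eq_prod,
    volume_regionBetween_eq_integral hf.neg hf hS fun t ht ↦ neg_le_self (hf₀ t ht), hwidth,
    ENNReal.toReal_ofReal
      (setIntegral_nonneg hS fun t ht ↦ mul_nonneg zero_le_two (hf₀ t ht))]

lemma mem_ball_pc {s : ℝ} (hs : 0 ≤ s) (c : ℝ) (p : EuclideanSpace ℝ (Fin 2)) :
    p ∈ ball (pc c) s ↔ |p 1| < √(s ^ 2 - (p 0 - c) ^ 2) := by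
  rw [mem_ball, dist_eq_norm, ← sq_lt_sq₀ (norm_nonneg _) hs, EuclideanSpace.real_norm_sq_eq,
    Fin.sum_univ_two, Real.lt_sqrt (abs_nonneg _), sq_abs, lt_sub_iff_add_lt']
  simp [pc]

lemma pc_zero : pc 0 = 0 := by
  ext i
  fin_cases i <;> rfl

lemma volume_real_ball_inter_ball_pc {r s c : ℝ} (hr : 0 ≤ r) (hs : 0 ≤ s) (hc : c ≤ r + s) :
    volume.real (ball 0 r ∩ ball (pc c) s) =
      ∫ t in (c - s)..r, 2 * min √(r ^ 2 - t ^ 2) √(s ^ 2 - (t - c) ^ 2) := by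
  have hlens : ball 0 r ∩ ball (pc c) s =
      {p : EuclideanSpace ℝ (Fin 2) | p 0 ∈ Ioc (c - s) r ∧
        |p 1| < min √(r ^ 2 - p 0 ^ 2) √(s ^ 2 - (p 0 - c) ^ 2)} := by
    ext p
    rw [← pc_zero, mem_inter_iff, mem_ball_pc hr, mem_ball_pc hs, mem_ofPred_eq, lt_min_iff,
      sub_zero, iff_and_self]
    rintro ⟨hpr, hps⟩
    have hr' : |p 0| < r := abs_lt_of_sq_lt_sq
      (sub_pos.1 (Real.sqrt_pos.1 ((abs_nonneg _).trans_lt hpr))) hr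
    have hs' : |p 0 - c| < s := abs_lt_of_sq_lt_sq
      (sub_pos.1 (Real.sqrt_pos.1 ((abs_nonneg _).trans_lt hps))) hs
    exact ⟨by linarith [(abs_lt.1 hs').1], (abs_lt.1 hr').2.le⟩
  have hcont : Continuous fun t ↦ min √(r ^ 2 - t ^ 2) √(s ^ 2 - (t - c) ^ 2) := by fun_prop
  rw [hlens, volume_real_setOf_abs_lt measurableSet_Ioc hcont.integrableOn_Ioc
    fun t _ ↦ le_min (Real.sqrt_nonneg _) (Real.sqrt_nonneg _),
    intervalIntegral.integral_of_le (by linarith)]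

/-- The area of the segment of `B(O,r)` on the side `a < t` of the vertical line `t = a`, for
`0 ≤ r`. Since `√` is `0` on negative numbers, this is also correct when the line misses the
disc. -/
noncomputable def circularSegmentArea (r a : ℝ) : ℝ :=
  ∫ t in a..r, 2 * √(r ^ 2 - t ^ 2)

lemma hasDerivAt_circularSegmentArea (r a : ℝ) :
    HasDerivAt (circularSegmentArea r) (-(2 * √(r ^ 2 - a ^ 2))) a := by
  have hcont : Continuous fun t ↦ 2 * √(r ^ 2 - t ^ 2) := by fun_prop
  exact intervalIntegral.integral_hasDerivAt_left (hcont.intervalIntegrable a r)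
    (hcont.stronglyMeasurableAtFilter _ _) hcont.continuousAt

/-- The abscissa of the radical axis of `C(O,r)` and `C(p_c,s)`, the line that carries their common
chord when they cross. The circles are concentric when `c = 0`, and the value is then the
junk `0`. -/
noncomputable def chordAbscissa (r s c : ℝ) : ℝ :=
  (c ^ 2 + r ^ 2 - s ^ 2) / (2 * c)

/-- Half the length of the common chord of `C(O,r)` and `C(p_c,s)`. -/
noncomputable def halfChord (r s c : ℝ) : ℝ :=
  √(r ^ 2 - chordAbscissa r s c ^ 2)

/-- The powers of `(t,0)` with respect to the two circles differ linearly in `t`, so the lens is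
bounded by `C(p_c,s)` to the left of the common chord and by `C(O,r)` to the right of it. -/
lemma power_sub_power_eq {c : ℝ} (hc : c ≠ 0) (r s t : ℝ) :
    (s ^ 2 - (t - c) ^ 2) - (r ^ 2 - t ^ 2) = 2 * c * (t - chordAbscissa r s c) := by
  rw [chordAbscissa]
  field_simp
  ring

lemma sq_sub_sub_chordAbscissa_sq {c : ℝ} (hc : c ≠ 0) (r s : ℝ) :
    s ^ 2 - (c - chordAbscissa r s c) ^ 2 = r ^ 2 - chordAbscissa r s c ^ 2 := by
  linear_combination power_sub_power_eq hc r s (chordAbscissa r s c)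

/-- Both sides are sixteen times the squared area of the triangle with sides `r`, `s`, `c`. -/
lemma heron_chordAbscissa {c : ℝ} (hc : c ≠ 0) (r s : ℝ) :
    4 * c ^ 2 * (r ^ 2 - chordAbscissa r s c ^ 2) =
      ((r + s) ^ 2 - c ^ 2) * (c ^ 2 - (r - s) ^ 2) := by
  rw [chordAbscissa]
  field_simp
  ring

section Crossing

variable {r s c : ℝ}

lemma pos_of_mem_Ioo_abs_sub_add (hc : c ∈ Ioo |r - s| (r + s)) : 0 < r ∧ 0 < s ∧ 0 < c := by
  obtain ⟨h₁, h₂⟩ := abs_lt.1 (hc.1.trans hc.2)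
  exact ⟨by linarith, by linarith, (abs_nonneg _).trans_lt hc.1⟩

lemma sq_sub_chordAbscissa_sq_pos (hc : c ∈ Ioo |r - s| (r + s)) :
    0 < r ^ 2 - chordAbscissa r s c ^ 2 := by
  obtain ⟨-, -, hc₀⟩ := pos_of_mem_Ioo_abs_sub_add hc
  obtain ⟨hlow, hhigh⟩ := abs_lt.1 hc.1
  refine (mul_pos_iff_of_pos_left (show 0 < 4 * c ^ 2 by positivity)).1 ?_
  rw [heron_chordAbscissa hc₀.ne']
  exact mul_pos (sub_pos.2 (pow_lt_pow_left₀ hc.2 hc₀.le two_ne_zero))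
    (sub_pos.2 (sq_lt_sq' hlow hhigh))

lemma halfChord_pos (hc : c ∈ Ioo |r - s| (r + s)) : 0 < halfChord r s c :=
  Real.sqrt_pos.2 (sq_sub_chordAbscissa_sq_pos hc)

lemma halfChord_sq (hc : c ∈ Ioo |r - s| (r + s)) :
    halfChord r s c ^ 2 = r ^ 2 - chordAbscissa r s c ^ 2 :=
  Real.sq_sqrt (sq_sub_chordAbscissa_sq_pos hc).le

lemma chordAbscissa_le (hc : c ∈ Ioo |r - s| (r + s)) : chordAbscissa r s c ≤ r := by
  obtain ⟨hr, -, -⟩ := pos_of_mem_Ioo_abs_sub_add hc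
  exact le_of_sq_le_sq (sub_nonneg.1 (sq_sub_chordAbscissa_sq_pos hc).le) hr.le

lemma sub_le_chordAbscissa (hc : c ∈ Ioo |r - s| (r + s)) : c - s ≤ chordAbscissa r s c := by
  obtain ⟨-, hs, hc₀⟩ := pos_of_mem_Ioo_abs_sub_add hc
  have hsq : 0 < s ^ 2 - (c - chordAbscissa r s c) ^ 2 :=
    sq_sub_sub_chordAbscissa_sq hc₀.ne' r s ▸ sq_sub_chordAbscissa_sq_pos hc
  exact sub_le_comm.1 (le_of_sq_le_sq (sub_nonneg.1 hsq.le) hs.le)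

lemma volume_real_ball_inter_ball_pc_eq_add_circularSegmentArea (hc : c ∈ Ioo |r - s| (r + s)) :
    volume.real (ball 0 r ∩ ball (pc c) s) =
      circularSegmentArea r (chordAbscissa r s c) +
        circularSegmentArea s (c - chordAbscissa r s c) := by
  obtain ⟨hr, hs, hc₀⟩ := pos_of_mem_Ioo_abs_sub_add hc
  set a := chordAbscissa r s c
  have hcont : Continuous fun t ↦ 2 * min √(r ^ 2 - t ^ 2) √(s ^ 2 - (t - c) ^ 2) := by
    fun_prop
  have hleft : ∫ t in (c - s)..a, 2 * min √(r ^ 2 - t ^ 2) √(s ^ 2 - (t - c) ^ 2) =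
      circularSegmentArea s (c - a) := by
    calc
      _ = ∫ t in (c - s)..a, 2 * √(s ^ 2 - (c - t) ^ 2) := by
        refine intervalIntegral.integral_congr fun t ht ↦ ?_
        rw [uIcc_of_le (sub_le_chordAbscissa hc)] at ht
        have hpower : s ^ 2 - (t - c) ^ 2 ≤ r ^ 2 - t ^ 2 := by
          rw [← sub_nonpos, power_sub_power_eq hc₀.ne']
          exact mul_nonpos_of_nonneg_of_nonpos (by positivity) (sub_nonpos.2 ht.2)
        simp only [min_eq_right (Real.sqrt_le_sqrt hpower), sub_sq_comm c t]
      _ = circularSegmentArea s (c - a) := by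
        rw [intervalIntegral.integral_comp_sub_left (fun u ↦ 2 * √(s ^ 2 - u ^ 2)), sub_sub_cancel,
          circularSegmentArea]
  have hright : ∫ t in a..r, 2 * min √(r ^ 2 - t ^ 2) √(s ^ 2 - (t - c) ^ 2) =
      circularSegmentArea r a := by
    refine intervalIntegral.integral_congr fun t ht ↦ ?_
    rw [uIcc_of_le (chordAbscissa_le hc)] at ht
    have hpower : r ^ 2 - t ^ 2 ≤ s ^ 2 - (t - c) ^ 2 := by
      rw [← sub_nonneg, power_sub_power_eq hc₀.ne']
      exact mul_nonneg (by positivity) (sub_nonneg.2 ht.1)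
    simp only [min_eq_left (Real.sqrt_le_sqrt hpower)]
  rw [volume_real_ball_inter_ball_pc hr.le hs.le hc.2.le,
    ← intervalIntegral.integral_add_adjacent_intervals (hcont.intervalIntegrable _ a)
      (hcont.intervalIntegrable a _), hleft, hright, add_comm]

lemma hasDerivAt_volume_real_ball_inter_ball_pc (hc : c ∈ Ioo |r - s| (r + s)) :
    HasDerivAt (fun x ↦ volume.real (ball 0 r ∩ ball (pc x) s)) (-(2 * halfChord r s c)) c := by
  obtain ⟨-, -, hc₀⟩ := pos_of_mem_Ioo_abs_sub_add hc
  have hchord : DifferentiableAt ℝ (chordAbscissa r s) c :=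
    DifferentiableAt.fun_div (by fun_prop) (by fun_prop) (by positivity)
  have hsegments : HasDerivAt
      (fun x ↦ circularSegmentArea r (chordAbscissa r s x) +
        circularSegmentArea s (x - chordAbscissa r s x))
      (-(2 * √(r ^ 2 - chordAbscissa r s c ^ 2)) * deriv (chordAbscissa r s) c +
        -(2 * √(s ^ 2 - (c - chordAbscissa r s c) ^ 2)) *
          (1 - deriv (chordAbscissa r s) c)) c :=
    ((hasDerivAt_circularSegmentArea r _).comp c hchord.hasDerivAt).add
      ((hasDerivAt_circularSegmentArea s _).comp c ((hasDerivAt_id c).sub hchord.hasDerivAt))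
  have hcrossing : ∀ᶠ x in 𝓝 c, x ∈ Ioo |r - s| (r + s) := Ioo_mem_nhds hc.1 hc.2
  refine (hsegments.congr_of_eventuallyEq (hcrossing.mono fun x hx ↦
    volume_real_ball_inter_ball_pc_eq_add_circularSegmentArea hx)).congr_deriv ?_
  rw [sq_sub_sub_chordAbscissa_sq hc₀.ne', halfChord]
  ring

end Crossing

lemma two_mul_halfChord_sub_halfChord {R Q s c : ℝ} (hR : c ∈ Ioo |R - s| (R + s))
    (hQ : c ∈ Ioo |Q - s| (Q + s)) :
    2 * (halfChord R s c - halfChord Q s c) =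
      (Q ^ 2 - R ^ 2) / (c ^ 2 * (halfChord R s c + halfChord Q s c)) *
        ((R ^ 2 + Q ^ 2) / 2 - (c ^ 2 + s ^ 2)) := by
  obtain ⟨-, -, hc⟩ := pos_of_mem_Ioo_abs_sub_add hR
  have hdenom : 0 < c ^ 2 * (halfChord R s c + halfChord Q s c) :=
    mul_pos (pow_pos hc 2) (add_pos (halfChord_pos hR) (halfChord_pos hQ))
  have hsq : 4 * c ^ 2 * (halfChord R s c ^ 2 - halfChord Q s c ^ 2) =
      (Q ^ 2 - R ^ 2) * (R ^ 2 + Q ^ 2 - 2 * (c ^ 2 + s ^ 2)) := by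
    rw [halfChord_sq hR, halfChord_sq hQ]
    linear_combination heron_chordAbscissa hc.ne' R s - heron_chordAbscissa hc.ne' Q s
  rw [div_mul_eq_mul_div, eq_div_iff hdenom.ne']
  linear_combination hsq / 2

lemma hasDerivAt_volume_real_annulus_inter_ball_pc {R Q s c : ℝ} (hRQ : R ≤ Q)
    (hR : c ∈ Ioo |R - s| (R + s)) (hQ : c ∈ Ioo |Q - s| (Q + s)) :
    HasDerivAt
      (fun x ↦ volume.real
        ({p : EuclideanSpace ℝ (Fin 2) | R ≤ ‖p‖ ∧ ‖p‖ ≤ Q} ∩ ball (pc x) s))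
      (2 * (halfChord R s c - halfChord Q s c)) c := by
  simp only [measureReal_annulus_inter_s5 volume hRQ]
  exact ((hasDerivAt_volume_real_ball_inter_ball_pc hQ).sub
    (hasDerivAt_volume_real_ball_inter_ball_pc hR)).congr_deriv (by ring)

/-- With `γ c = vol(A_{R,Q} ∩ B((c,0),s))`, if `c + s > Q`, `s - c < R` and
`c - s < R`, then `γ` is differentiable at `c` and its derivative is zero (resp. positive,
negative) exactly when `c² + s²` equals (resp. is less than, greater than) `(R² + Q²)/2`. -/
theorem gamma_deriv_sign
    (R Q s c : ℝ) (hR : 0 < R) (hRQ : R < Q) (hs : 0 < s) (hc : 0 < c)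
    (h1 : Q < c + s) (h2 : s - c < R) (h3 : c - s < R)
    (γ : ℝ → ℝ)
    (hγ : ∀ x, γ x =
      (volume ({p : EuclideanSpace ℝ (Fin 2) | R ≤ ‖p‖ ∧ ‖p‖ ≤ Q} ∩ ball (pc x) s)).toReal) :
    ∃ d : ℝ, HasDerivAt γ d c ∧
      (d = 0 ↔ c ^ 2 + s ^ 2 = (R ^ 2 + Q ^ 2) / 2) ∧
      (0 < d ↔ c ^ 2 + s ^ 2 < (R ^ 2 + Q ^ 2) / 2) ∧
      (d < 0 ↔ (R ^ 2 + Q ^ 2) / 2 < c ^ 2 + s ^ 2) := by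
  have hcR : c ∈ Ioo |R - s| (R + s) :=
    ⟨abs_sub_lt_iff.2 ⟨by linarith, by linarith⟩, by linarith⟩
  have hcQ : c ∈ Ioo |Q - s| (Q + s) :=
    ⟨abs_sub_lt_iff.2 ⟨by linarith, by linarith⟩, by linarith⟩
  have hderiv : HasDerivAt γ (2 * (halfChord R s c - halfChord Q s c)) c := by
    rw [funext hγ]
    exact hasDerivAt_volume_real_annulus_inter_ball_pc hRQ.le hcR hcQ
  have hfactor : 0 < (Q ^ 2 - R ^ 2) / (c ^ 2 * (halfChord R s c + halfChord Q s c)) :=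
    div_pos (sub_pos.2 (pow_lt_pow_left₀ hRQ hR.le two_ne_zero))
      (mul_pos (pow_pos hc 2) (add_pos (halfChord_pos hcR) (halfChord_pos hcQ)))
  refine ⟨_, hderiv, ?_, ?_, ?_⟩ <;> rw [two_mul_halfChord_sub_halfChord hcR hcQ]
  · rw [mul_eq_zero_iff_left hfactor.ne', sub_eq_zero, eq_comm]
  · rw [mul_pos_iff_of_pos_left hfactor, sub_pos]
  · rw [← smul_eq_mul, smul_neg_iff_of_pos_left hfactor, sub_neg]
end

section
/- Fix 0 < R < Q and 0 < w < 1, set a = w/(πR²) and b = (1−w)/(π(Q²−R²)), and assume a < b. Let μ be the measure on the Euclidean plane with density f with respect to 2-dimensional Lebesgue measure, where f(p) = a if ‖p‖ < R, f(p) = b if R ≤ ‖p‖ ≤ Q, and f(p) = 0 if ‖p‖ > Q. For s > 0 define ν_s : [0,Q] → [0,1] by ν_s(c) = μ(B(p_c,s)). Then for every s > 0 there exists ω ∈ [0,Q] such that ν_s is non-decreasing on [0,ω] and non-increasing on [ω,Q]. -/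
open Set MeasureTheory Metric

open Module
open scoped ENNReal NNReal

/-!
Let `V r c` be the volume of the intersection of the balls of radii `r` and `s` whose centres are at
distance `c`, so that the measure of the moving ball is `b * V Q c - (b - a) * V R c`. Slice the
intersection by lines parallel to the axis through the centres: each slice is the overlap of two
intervals, which shrinks at unit speed exactly while their endpoints interlace. By Fubini, `V r`
decreases at a rate equal to the volume of the ball of radius `lensRadius r s c` in the hyperplane
orthogonal to the axis. Writing `b - a = κ ^ (n - 1) * b` with `κ ≤ 1`, where `n` is the dimension
of the space, the derivative of the measure has the sign of `κ * lensRadius R s - lensRadius Q s`.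
Up to a common positive factor both squares are quadratics in `c ^ 2` whose difference is concave,
so this sign changes at most once, from nonnegative to nonpositive.
-/

/-- The radius of the sphere in which the spheres of radii `r` and `s`, with centres at distance
`c`, intersect. By Heron's formula the argument of the square root is sixteen times the squared area
of a triangle with sides `r`, `s`, `c`; if the spheres do not meet, it is not positive and the value
is `0`. -/
noncomputable def lensRadius (r s c : ℝ) : ℝ :=
  √((c ^ 2 - (r - s) ^ 2) * ((r + s) ^ 2 - c ^ 2)) / (2 * c)

@[fun_prop]
theorem measurable_lensRadius (r s : ℝ) : Measurable (lensRadius r s) := by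
  unfold lensRadius
  fun_prop

theorem lt_lensRadius_iff_sq_lt {r s c η : ℝ} (hc : 0 < c) (hη : 0 ≤ η) :
    η < lensRadius r s c ↔
      4 * c ^ 2 * η ^ 2 < (c ^ 2 - (r - s) ^ 2) * ((r + s) ^ 2 - c ^ 2) := by
  rw [lensRadius, lt_div_iff₀ (by positivity), Real.lt_sqrt (by positivity)]
  ring_nf

theorem sq_sub_sq_mul_sq_sub_sq_pos_iff {p q c : ℝ} (hc : 0 < c) (hq : 0 ≤ q)
    (hpq : p ^ 2 ≤ q ^ 2) :
    0 < (c ^ 2 - p ^ 2) * (q ^ 2 - c ^ 2) ↔ |p| < c ∧ c < q := by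
  rw [← abs_of_pos hc, ← sq_lt_sq, ← sq_lt_sq₀ (abs_nonneg c) hq, sq_abs, mul_pos_iff]
  constructor
  · rintro (⟨hp, hq⟩ | ⟨hp, hq⟩) <;> constructor <;> linarith
  · rintro ⟨hp, hq⟩
    exact .inl ⟨sub_pos.2 hp, sub_pos.2 hq⟩

/-- A chord at height `η` has half-lengths `√(r ^ 2 - η ^ 2)` and `√(s ^ 2 - η ^ 2)` in the two
balls. -/
theorem lt_lensRadius_iff {r s c η : ℝ} (hc : 0 < c) (hη : 0 ≤ η) :
    η < lensRadius r s c ↔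
      c ∈ Ioo |√(r ^ 2 - η ^ 2) - √(s ^ 2 - η ^ 2)| (√(r ^ 2 - η ^ 2) + √(s ^ 2 - η ^ 2)) := by
  rw [lt_lensRadius_iff_sq_lt hc hη, mem_Ioo]
  by_cases h : η ^ 2 < r ^ 2 ∧ η ^ 2 < s ^ 2
  · set u := √(r ^ 2 - η ^ 2)
    set v := √(s ^ 2 - η ^ 2)
    have hu : u ^ 2 = r ^ 2 - η ^ 2 := Real.sq_sqrt (by linarith)
    have hv : v ^ 2 = s ^ 2 - η ^ 2 := Real.sq_sqrt (by linarith)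
    have hu0 : 0 ≤ u := Real.sqrt_nonneg _
    have hv0 : 0 ≤ v := Real.sqrt_nonneg _
    have factor : (c ^ 2 - (r - s) ^ 2) * ((r + s) ^ 2 - c ^ 2) - 4 * c ^ 2 * η ^ 2 =
        (c ^ 2 - (u - v) ^ 2) * ((u + v) ^ 2 - c ^ 2) := by
      grind
    rw [← sub_pos, factor, sq_sub_sq_mul_sq_sub_sq_pos_iff hc (by positivity) (by nlinarith)]
  · have le_r : (c ^ 2 - (r - s) ^ 2) * ((r + s) ^ 2 - c ^ 2) ≤ 4 * c ^ 2 * r ^ 2 := by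
      linarith [sq_nonneg (c ^ 2 + r ^ 2 - s ^ 2)]
    have le_s : (c ^ 2 - (r - s) ^ 2) * ((r + s) ^ 2 - c ^ 2) ≤ 4 * c ^ 2 * s ^ 2 := by
      linarith [sq_nonneg (c ^ 2 + s ^ 2 - r ^ 2)]
    refine iff_of_false (fun hlt => h ⟨?_, ?_⟩) ?_
    · exact lt_of_mul_lt_mul_left (hlt.trans_le le_r) (by positivity)
    · exact lt_of_mul_lt_mul_left (hlt.trans_le le_s) (by positivity)
    · rintro ⟨hlt, hgt⟩
      rcases not_and_or.1 h with h | h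
      · rw [Real.sqrt_eq_zero_of_nonpos (by linarith : r ^ 2 - η ^ 2 ≤ 0)] at hlt hgt
        linarith [neg_abs_le (0 - √(s ^ 2 - η ^ 2))]
      · rw [Real.sqrt_eq_zero_of_nonpos (by linarith : s ^ 2 - η ^ 2 ≤ 0)] at hlt hgt
        linarith [le_abs_self (√(r ^ 2 - η ^ 2) - 0)]

/-- With `t = c ^ 2`, the right-hand side minus the left-hand side is a concave quadratic in `t`,
nonnegative at `t₀` and at `(R + s) ^ 2`, hence between them. -/
theorem heron_crossing {R Q s k t₀ t : ℝ} (hR : 0 ≤ R) (hRQ : R ≤ Q) (hs : 0 ≤ s) (hk : k ≤ 1)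
    (htt : t₀ ≤ t) (hpos : 0 < (t₀ - (Q - s) ^ 2) * ((Q + s) ^ 2 - t₀))
    (h₀ : k * ((t₀ - (R - s) ^ 2) * ((R + s) ^ 2 - t₀)) ≤
      (t₀ - (Q - s) ^ 2) * ((Q + s) ^ 2 - t₀))
    (ht : t < (R + s) ^ 2) :
    k * ((t - (R - s) ^ 2) * ((R + s) ^ 2 - t)) ≤ (t - (Q - s) ^ 2) * ((Q + s) ^ 2 - t) := by
  set D : ℝ → ℝ := fun t => (t - (Q - s) ^ 2) * ((Q + s) ^ 2 - t) -
    k * ((t - (R - s) ^ 2) * ((R + s) ^ 2 - t)) with hD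
  set T := (R + s) ^ 2 with hT
  have hTQ : T ≤ (Q + s) ^ 2 := pow_le_pow_left₀ (by positivity) (by linarith) 2
  have ht₀ : (Q - s) ^ 2 < t₀ := by
    by_contra! hle
    exact hpos.not_ge (mul_nonpos_of_nonpos_of_nonneg (by linarith) (by linarith))
  have hDt₀ : 0 ≤ D t₀ := sub_nonneg.2 h₀
  have hDT : 0 ≤ D T := by
    simp only [hD, sub_self, mul_zero, sub_zero]
    exact mul_nonneg (by linarith) (by linarith)
  have concave : (T - t₀) * D t =
      (T - t) * D t₀ + (t - t₀) * D T + (1 - k) * ((T - t) * (t - t₀) * (T - t₀)) := by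
    simp only [hD]
    clear_value T
    ring
  have hTt : 0 ≤ T - t := by linarith
  have htt' : 0 ≤ t - t₀ := by linarith
  have hTt₀ : 0 < T - t₀ := by linarith
  have hk' : 0 ≤ 1 - k := by linarith
  have : 0 ≤ (T - t₀) * D t := by
    rw [concave]
    exact add_nonneg (add_nonneg (mul_nonneg hTt hDt₀) (mul_nonneg htt' hDT))
      (mul_nonneg hk' (mul_nonneg (mul_nonneg hTt htt') hTt₀.le))
  exact sub_nonneg.1 (nonneg_of_mul_nonneg_right this hTt₀)

theorem lensRadius_crossing {R Q s κ c₀ c : ℝ} (hR : 0 ≤ R) (hRQ : R ≤ Q) (hs : 0 ≤ s)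
    (hκ₀ : 0 ≤ κ) (hκ₁ : κ ≤ 1) (hc₀ : 0 < c₀) (hcc : c₀ ≤ c)
    (h : κ * lensRadius R s c₀ < lensRadius Q s c₀) :
    κ * lensRadius R s c ≤ lensRadius Q s c := by
  have hc : 0 < c := hc₀.trans_le hcc
  have mul_lensRadius (r x : ℝ) : κ * lensRadius r s x =
      √(κ ^ 2 * ((x ^ 2 - (r - s) ^ 2) * ((r + s) ^ 2 - x ^ 2))) / (2 * x) := by
    rw [lensRadius, Real.sqrt_mul (sq_nonneg κ), Real.sqrt_sq hκ₀, mul_div_assoc]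
  rw [mul_lensRadius, lensRadius, div_lt_div_iff_of_pos_right (by positivity)] at h
  rw [mul_lensRadius, lensRadius, div_le_div_iff_of_pos_right (by positivity)]
  rcases lt_or_ge (c ^ 2) ((R + s) ^ 2) with hlt | hge
  · exact Real.sqrt_le_sqrt <| heron_crossing hR hRQ hs (pow_le_one₀ hκ₀ hκ₁) (by gcongr)
      (Real.sqrt_pos.1 ((Real.sqrt_nonneg _).trans_lt h)) (Real.sqrt_monotone.reflect_lt h).le hlt
  · have hRs : (R - s) ^ 2 ≤ c ^ 2 := by nlinarith [mul_nonneg hR hs]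
    have : κ ^ 2 * ((c ^ 2 - (R - s) ^ 2) * ((R + s) ^ 2 - c ^ 2)) ≤ 0 :=
      mul_nonpos_of_nonneg_of_nonpos (sq_nonneg κ)
        (mul_nonpos_of_nonneg_of_nonpos (sub_nonneg.2 hRs) (sub_nonpos.2 hge))
    rw [Real.sqrt_eq_zero_of_nonpos this]
    positivity

/-- The overlap shrinks at unit speed in `c` while `|u - v| < c < u + v`, and is constant
otherwise. -/
theorem volume_ball_inter_ball_real_eq_add {u v c₁ c₂ : ℝ} (hu : 0 ≤ u) (hv : 0 ≤ v) (h₁ : 0 ≤ c₁)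
    (h₁₂ : c₁ ≤ c₂) :
    volume (ball 0 u ∩ ball c₁ v) =
      volume (ball 0 u ∩ ball c₂ v) + volume (Ioo |u - v| (u + v) ∩ Ioo c₁ c₂) := by
  have ofReal_eq (x : ℝ) : ENNReal.ofReal x = ENNReal.ofReal (max x 0) := by simp
  simp only [Real.ball_eq_Ioo, Ioo_inter_Ioo, Real.volume_Ioo]
  rw [ofReal_eq, ofReal_eq (_ ⊓ (c₂ + v) - _), ofReal_eq (_ ⊓ c₂ - _),
    ← ENNReal.ofReal_add (le_max_right _ _) (le_max_right _ _)]
  congr 1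
  grind

section Lens

variable {F : Type*} [SeminormedAddCommGroup F]

/-- The intersection of the balls of radii `r` and `s` about `(0, 0)` and `(c, 0)` in `ℝ × F`, for
the Euclidean distance rather than the sup distance carried by the product type. -/
def lens (F : Type*) [SeminormedAddCommGroup F] (r s c : ℝ) : Set (ℝ × F) :=
  {p | p.1 ^ 2 + ‖p.2‖ ^ 2 < r ^ 2 ∧ (p.1 - c) ^ 2 + ‖p.2‖ ^ 2 < s ^ 2}

theorem preimage_mk_lens (r s c : ℝ) (y : F) :
    (fun x => (x, y)) ⁻¹' lens F r s c =
      ball 0 √(r ^ 2 - ‖y‖ ^ 2) ∩ ball c √(s ^ 2 - ‖y‖ ^ 2) := by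
  ext x
  simp only [lens, mem_preimage, mem_ofPred_eq, mem_inter_iff, mem_ball, Real.dist_eq, sub_zero,
    Real.lt_sqrt (abs_nonneg _), sq_abs, lt_sub_iff_add_lt]

variable [MeasurableSpace F] [OpensMeasurableSpace F]

theorem measurableSet_lens (r s c : ℝ) : MeasurableSet (lens F r s c) := by
  rw [lens, ofPred_and]
  exact (measurableSet_lt (by fun_prop) (by fun_prop)).inter
    (measurableSet_lt (by fun_prop) (by fun_prop))

theorem lintegral_ball_lensRadius (m : Measure F) [SFinite m] (r s : ℝ) {c₁ : ℝ} (h₁ : 0 ≤ c₁)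
    (c₂ : ℝ) :
    ∫⁻ c in Ioo c₁ c₂, m (ball 0 (lensRadius r s c)) =
      ∫⁻ y, volume (Ioo |√(r ^ 2 - ‖y‖ ^ 2) - √(s ^ 2 - ‖y‖ ^ 2)|
        (√(r ^ 2 - ‖y‖ ^ 2) + √(s ^ 2 - ‖y‖ ^ 2)) ∩ Ioo c₁ c₂) ∂m := by
  have hmeas : MeasurableSet {p : ℝ × F | ‖p.2‖ < lensRadius r s p.1} :=
    measurableSet_lt (by fun_prop) (by fun_prop)
  calc ∫⁻ c in Ioo c₁ c₂, m (ball 0 (lensRadius r s c))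
    _ = ((volume.restrict (Ioo c₁ c₂)).prod m) {p | ‖p.2‖ < lensRadius r s p.1} := by
      simp only [Measure.prod_apply hmeas, preimage_ofPred_eq, ball, dist_zero_right]
    _ = ∫⁻ y, volume ({c | ‖y‖ < lensRadius r s c} ∩ Ioo c₁ c₂) ∂m := by
      simp only [Measure.prod_apply_symm hmeas, Measure.restrict_apply' measurableSet_Ioo,
        preimage_ofPred_eq]
    _ = _ := by
      congr! 3 with y
      ext c
      exact and_congr_left fun hc => lt_lensRadius_iff (h₁.trans_lt hc.1) (norm_nonneg y)

theorem prod_lens_eq_add (m : Measure F) [SFinite m] (r s : ℝ) {c₁ c₂ : ℝ} (h₁ : 0 ≤ c₁)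
    (h₁₂ : c₁ ≤ c₂) :
    (volume.prod m) (lens F r s c₁) = (volume.prod m) (lens F r s c₂) +
      ∫⁻ c in Ioo c₁ c₂, m (ball 0 (lensRadius r s c)) := by
  rw [lintegral_ball_lensRadius m r s h₁, Measure.prod_apply_symm (measurableSet_lens r s c₁),
    Measure.prod_apply_symm (measurableSet_lens r s c₂),
    ← lintegral_add_left (measurable_measure_prodMk_right (measurableSet_lens r s c₂))]
  refine lintegral_congr fun y => ?_
  rw [preimage_mk_lens, preimage_mk_lens]
  exact volume_ball_inter_ball_real_eq_add (Real.sqrt_nonneg _) (Real.sqrt_nonneg _) h₁ h₁₂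

end Lens

/-- The measure `W(R, Q, w)`, with arbitrary densities `a` on the open ball of radius `R` and `b` on
the remaining shell of the closed ball of radius `Q` in place of those determined by `w`. -/
noncomputable def weightedAnnulus (E : Type*) [Norm E] [MeasureSpace E] (R Q : ℝ) (a b : ℝ≥0) :
    Measure E :=
  volume.withDensity fun p => if ‖p‖ < R then a else if ‖p‖ ≤ Q then b else 0

section NormedSpace

variable {E : Type*} [NormedAddCommGroup E] [NormedSpace ℝ E] [FiniteDimensional ℝ E]

theorem mul_addHaar_ball_of_pow_mul_eq [MeasurableSpace E] [BorelSpace E] [Nontrivial E]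
    (m : Measure E) [m.IsAddHaarMeasure] {a b κ : ℝ≥0} (hκ : κ ^ finrank ℝ E * b = a) (r : ℝ) :
    a * m (ball 0 r) = b * m (ball 0 (κ * r)) := by
  rw [Measure.addHaar_ball_mul m 0 κ.coe_nonneg, ← hκ, ENNReal.ofReal_pow κ.coe_nonneg,
    ENNReal.ofReal_coe_nnreal]
  push_cast
  ring

variable [MeasureSpace E] [BorelSpace E] [(volume : Measure E).IsAddHaarMeasure]

theorem weightedAnnulus_add_restrict_ball {R Q : ℝ} {a α b : ℝ≥0} (hQ : Q ≠ 0) (hRQ : R ≤ Q)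
    (hab : a + α = b) :
    weightedAnnulus E R Q a b + (α : ℝ≥0∞) • volume.restrict (ball 0 R) =
      (b : ℝ≥0∞) • volume.restrict (ball 0 Q) := by
  have ball_ae_eq : (ball 0 Q : Set E) =ᵐ[volume] closedBall 0 Q := by
    rw [← ball_union_sphere]
    exact (union_ae_eq_left_of_ae_eq_empty
      (ae_eq_empty.2 (Measure.addHaar_sphere_of_ne_zero _ _ hQ))).symm
  rw [Measure.restrict_congr_set ball_ae_eq, weightedAnnulus, ← withDensity_const,
    ← withDensity_const, ← withDensity_indicator measurableSet_ball,
    ← withDensity_indicator measurableSet_closedBall,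
    ← withDensity_add_right _ (measurable_const.indicator measurableSet_ball)]
  congr 1
  ext p
  by_cases hpR : ‖p‖ < R
  · simp [hpR, hpR.le.trans hRQ, ← hab]
  · simp [indicator, hpR]

theorem weightedAnnulus_ball_ne_top (R Q : ℝ) (a b : ℝ≥0) (x : E) (s : ℝ) :
    weightedAnnulus E R Q a b (ball x s) ≠ ∞ := by
  have density_le (p : E) : (if ‖p‖ < R then (a : ℝ≥0∞) else if ‖p‖ ≤ Q then b else 0) ≤ a + b := by
    split_ifs <;> simp
  rw [weightedAnnulus, withDensity_apply _ measurableSet_ball]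
  refine ne_top_of_le_ne_top ?_ (lintegral_mono density_le)
  rw [setLIntegral_const]
  exact ENNReal.mul_ne_top (by simp) measure_ball_lt_top.ne

end NormedSpace

section Euclidean

variable {E : Type*} [NormedAddCommGroup E] [InnerProductSpace ℝ E]

theorem smul_add_mem_ball_iff {e : E} (he : ‖e‖ = 1) {s : ℝ} (hs : 0 ≤ s) (c x : ℝ)
    (y : (ℝ ∙ e)ᗮ) :
    x • e + (y : E) ∈ ball (c • e) s ↔ (x - c) ^ 2 + ‖y‖ ^ 2 < s ^ 2 := by
  have inner_eq_zero : inner ℝ ((x - c) • e) (y : E) = 0 := by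
    rw [real_inner_smul_left, Submodule.mem_orthogonal_singleton_iff_inner_right.1 y.2, mul_zero]
  have norm_sq : ‖(x - c) • e + (y : E)‖ ^ 2 = (x - c) ^ 2 + ‖y‖ ^ 2 := by
    rw [norm_add_sq_real, inner_eq_zero, norm_smul, he, Real.norm_eq_abs, mul_one, sq_abs,
      mul_zero, add_zero, Submodule.coe_norm]
  rw [mem_ball_iff_norm, add_sub_right_comm, ← sub_smul, ← sq_lt_sq₀ (norm_nonneg _) hs, norm_sq]

variable [MeasurableSpace E] [BorelSpace E] [FiniteDimensional ℝ E]

theorem measurePreserving_smul_add_orthogonal {e : E} (he : ‖e‖ = 1) :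
    MeasurePreserving (fun p : ℝ × (ℝ ∙ e)ᗮ => p.1 • e + (p.2 : E)) :=
  (ℝ ∙ e).orthogonalDecomposition.symm.measurePreserving.comp <|
    (WithLp.volume_preserving_toLp _ _).comp <|
      (LinearIsometryEquiv.toSpanUnitSingleton e he).measurePreserving.prod (.id volume)

theorem volume_ball_inter_ball_smul {e : E} (he : ‖e‖ = 1) {r s : ℝ} (hr : 0 ≤ r) (hs : 0 ≤ s)
    (c : ℝ) :
    volume (ball 0 r ∩ ball (c • e) s) = (volume.prod volume) (lens (ℝ ∙ e)ᗮ r s c) := by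
  rw [← (measurePreserving_smul_add_orthogonal he).measure_preimage
    (measurableSet_ball.inter measurableSet_ball).nullMeasurableSet]
  congr 1
  ext ⟨x, y⟩
  have mem_ball_zero := smul_add_mem_ball_iff he hr 0 x y
  rw [zero_smul, sub_zero] at mem_ball_zero
  exact and_congr mem_ball_zero (smul_add_mem_ball_iff he hs c x y)

theorem volume_ball_inter_ball_smul_eq_add {e : E} (he : ‖e‖ = 1) {r s c₁ c₂ : ℝ} (hr : 0 ≤ r)
    (hs : 0 ≤ s) (h₁ : 0 ≤ c₁) (h₁₂ : c₁ ≤ c₂) :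
    volume (ball 0 r ∩ ball (c₁ • e) s) = volume (ball 0 r ∩ ball (c₂ • e) s) +
      ∫⁻ c in Ioo c₁ c₂, volume (ball (0 : (ℝ ∙ e)ᗮ) (lensRadius r s c)) := by
  simp only [volume_ball_inter_ball_smul he hr hs]
  exact prod_lens_eq_add volume r s h₁ h₁₂

theorem weightedAnnulus_ball_smul_add {e : E} (he : ‖e‖ = 1) {R Q s c₁ c₂ : ℝ} {a α b : ℝ≥0}
    (hR : 0 < R) (hRQ : R ≤ Q) (hab : a + α = b) (hs : 0 ≤ s) (h₁ : 0 ≤ c₁) (h₁₂ : c₁ ≤ c₂) :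
    weightedAnnulus E R Q a b (ball (c₁ • e) s) +
        ∫⁻ c in Ioo c₁ c₂, α * volume (ball (0 : (ℝ ∙ e)ᗮ) (lensRadius R s c)) =
      weightedAnnulus E R Q a b (ball (c₂ • e) s) +
        ∫⁻ c in Ioo c₁ c₂, b * volume (ball (0 : (ℝ ∙ e)ᗮ) (lensRadius Q s c)) := by
  have hQ : 0 < Q := hR.trans_le hRQ
  have add_inter (c : ℝ) : weightedAnnulus E R Q a b (ball (c • e) s) +
      α * volume (ball 0 R ∩ ball (c • e) s) = b * volume (ball 0 Q ∩ ball (c • e) s) := by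
    have h := DFunLike.congr_fun (weightedAnnulus_add_restrict_ball (E := E) hQ.ne' hRQ hab)
      (ball (c • e) s)
    simpa [Measure.restrict_apply measurableSet_ball, inter_comm] using h
  have inter_ne_top : α * volume (ball 0 R ∩ ball (c₂ • e) s) ≠ ∞ :=
    ENNReal.mul_ne_top ENNReal.coe_ne_top
      (measure_ne_top_of_subset inter_subset_left measure_ball_lt_top.ne)
  rw [lintegral_const_mul' _ _ ENNReal.coe_ne_top, lintegral_const_mul' _ _ ENNReal.coe_ne_top,
    ← ENNReal.add_left_inj inter_ne_top]
  calc
    _ = weightedAnnulus E R Q a b (ball (c₁ • e) s) +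
        α * volume (ball 0 R ∩ ball (c₁ • e) s) := by
      rw [volume_ball_inter_ball_smul_eq_add he hR.le hs h₁ h₁₂]
      ring
    _ = _ := by
      rw [add_inter, volume_ball_inter_ball_smul_eq_add he hQ.le hs h₁ h₁₂, mul_add, ← add_inter]
      ring

theorem lintegral_ball_lensRadius_ne_top {e : E} (he : ‖e‖ = 1) {r s c₁ : ℝ} (hr : 0 ≤ r)
    (hs : 0 ≤ s) (h₁ : 0 ≤ c₁) (c₂ : ℝ) (k : ℝ≥0) :
    ∫⁻ c in Ioo c₁ c₂, k * volume (ball (0 : (ℝ ∙ e)ᗮ) (lensRadius r s c)) ≠ ∞ := by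
  rw [lintegral_const_mul' _ _ ENNReal.coe_ne_top]
  refine ENNReal.mul_ne_top ENNReal.coe_ne_top ?_
  rcases le_total c₁ c₂ with h | h
  · refine ne_top_of_le_ne_top ?_
      (le_add_self.trans_eq (volume_ball_inter_ball_smul_eq_add he hr hs h₁ h).symm)
    exact measure_ne_top_of_subset inter_subset_left measure_ball_lt_top.ne
  · simp [Ioo_eq_empty h.not_gt]

theorem weightedAnnulus_ball_smul_le {e : E} (he : ‖e‖ = 1) {R Q s c₁ c₂ : ℝ} {a α b : ℝ≥0}
    (hR : 0 < R) (hRQ : R ≤ Q) (hab : a + α = b) (hs : 0 ≤ s) (h₁ : 0 ≤ c₁) (h₁₂ : c₁ ≤ c₂)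
    (h : ∀ c ∈ Ioo c₁ c₂, b * volume (ball (0 : (ℝ ∙ e)ᗮ) (lensRadius Q s c)) ≤
      α * volume (ball (0 : (ℝ ∙ e)ᗮ) (lensRadius R s c))) :
    weightedAnnulus E R Q a b (ball (c₁ • e) s) ≤ weightedAnnulus E R Q a b (ball (c₂ • e) s) := by
  refine (ENNReal.add_le_add_iff_right (lintegral_ball_lensRadius_ne_top he
    (hR.le.trans hRQ) hs h₁ c₂ b)).1 ?_
  rw [← weightedAnnulus_ball_smul_add he hR hRQ hab hs h₁ h₁₂]
  gcongr _ + ?_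
  exact setLIntegral_mono' measurableSet_Ioo h

theorem weightedAnnulus_ball_smul_ge {e : E} (he : ‖e‖ = 1) {R Q s c₁ c₂ : ℝ} {a α b : ℝ≥0}
    (hR : 0 < R) (hRQ : R ≤ Q) (hab : a + α = b) (hs : 0 ≤ s) (h₁ : 0 ≤ c₁) (h₁₂ : c₁ ≤ c₂)
    (h : ∀ c ∈ Ioo c₁ c₂, α * volume (ball (0 : (ℝ ∙ e)ᗮ) (lensRadius R s c)) ≤
      b * volume (ball (0 : (ℝ ∙ e)ᗮ) (lensRadius Q s c))) :
    weightedAnnulus E R Q a b (ball (c₂ • e) s) ≤ weightedAnnulus E R Q a b (ball (c₁ • e) s) := by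
  refine (ENNReal.add_le_add_iff_right (lintegral_ball_lensRadius_ne_top he
    hR.le hs h₁ c₂ α)).1 ?_
  rw [weightedAnnulus_ball_smul_add he hR hRQ hab hs h₁ h₁₂]
  gcongr _ + ?_
  exact setLIntegral_mono' measurableSet_Ioo h

end Euclidean

theorem exists_mem_Icc_forall_le_forall_le {X Y : Type*} [ConditionallyCompleteLinearOrder X]
    [LinearOrder Y] {f g : X → Y} {l u : X} (hlu : l ≤ u)
    (hfg : ∀ x y, l < x → x ≤ y → f x < g x → f y ≤ g y) :
    ∃ ω ∈ Icc l u, (∀ x ∈ Ioo l ω, g x ≤ f x) ∧ ∀ x ∈ Ioo ω u, f x ≤ g x := by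
  set S : Set X := insert u {x ∈ Ioo l u | f x < g x}
  have hSu : u ∈ S := mem_insert _ _
  have hSl : l ∈ lowerBounds S := by
    rintro x (rfl | hx)
    exacts [hlu, hx.1.1.le]
  have hSωu : sInf S ≤ u := csInf_le ⟨l, hSl⟩ hSu
  refine ⟨sInf S, ⟨le_csInf ⟨u, hSu⟩ hSl, hSωu⟩, fun x hx => ?_, fun x hx => ?_⟩
  · by_contra! hlt
    exact notMem_of_lt_csInf hx.2 ⟨l, hSl⟩ (.inr ⟨⟨hx.1, hx.2.trans_le hSωu⟩, hlt⟩)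
  · obtain ⟨x₀, rfl | hx₀, hlt⟩ := exists_lt_of_csInf_lt ⟨u, hSu⟩ hx.1
    · exact absurd hlt hx.2.not_gt
    · exact hfg x₀ x hx₀.1.1 hlt.le hx₀.2

theorem nontrivial_orthogonal_span_singleton {E : Type*} [NormedAddCommGroup E]
    [InnerProductSpace ℝ E] (hE : 1 < finrank ℝ E) (e : E) : Nontrivial (ℝ ∙ e)ᗮ := by
  have : FiniteDimensional ℝ E := .of_finrank_pos (by lia)
  have hadd := (ℝ ∙ e).finrank_add_finrank_orthogonal
  have hle : finrank ℝ (ℝ ∙ e) ≤ 1 := by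
    simpa using finrank_span_le_card (R := ℝ) ({e} : Set E)
  exact nontrivial_of_finrank_pos (R := ℝ) (by lia)

theorem exists_le_one_pow_mul_eq {n : ℕ} (hn : n ≠ 0) {α b : ℝ≥0} (h : α ≤ b) :
    ∃ κ ≤ 1, κ ^ n * b = α := by
  refine ⟨(α / b) ^ (n : ℝ)⁻¹,
    NNReal.rpow_le_one (div_le_one_of_le₀ h zero_le) (by positivity), ?_⟩
  rw [NNReal.rpow_inv_natCast_pow _ hn, div_mul_cancel_of_imp]
  rintro rfl
  exact le_zero_iff.1 h

theorem weighted_annulus_nu_unimodal_general {E : Type*} [NormedAddCommGroup E]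
    [InnerProductSpace ℝ E] [FiniteDimensional ℝ E] [MeasurableSpace E] [BorelSpace E]
    (hE : 1 < finrank ℝ E) {e : E} (he : ‖e‖ = 1) {R Q s L : ℝ} {a b : ℝ≥0} (hR : 0 < R)
    (hRQ : R ≤ Q) (hab : a ≤ b) (hs : 0 ≤ s) (hL : 0 ≤ L) :
    ∃ ω ∈ Icc 0 L,
      MonotoneOn (fun c => (weightedAnnulus E R Q a b).real (ball (c • e) s)) (Icc 0 ω) ∧
      AntitoneOn (fun c => (weightedAnnulus E R Q a b).real (ball (c • e) s)) (Icc ω L) := by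
  have : Nontrivial (ℝ ∙ e)ᗮ := nontrivial_orthogonal_span_singleton hE e
  obtain ⟨α, hα⟩ := exists_add_of_le hab
  obtain ⟨κ, hκ₁, hκ⟩ := exists_le_one_pow_mul_eq (finrank_pos (R := ℝ) (M := (ℝ ∙ e)ᗮ)).ne'
    (hα ▸ le_add_self : α ≤ b)
  obtain ⟨ω, hω, hbefore, hafter⟩ := exists_mem_Icc_forall_le_forall_le hL
    fun x y hx hxy => lensRadius_crossing hR.le hRQ hs κ.coe_nonneg hκ₁ hx hxy
  refine ⟨ω, hω,
    fun x hx y hy hxy => ENNReal.toReal_mono (weightedAnnulus_ball_ne_top _ _ _ _ _ _) <|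
      weightedAnnulus_ball_smul_le he hR hRQ hα.symm hs hx.1 hxy fun c hc => ?_,
    fun x hx y hy hxy => ENNReal.toReal_mono (weightedAnnulus_ball_ne_top _ _ _ _ _ _) <|
      weightedAnnulus_ball_smul_ge he hR hRQ hα.symm hs (hω.1.trans hx.1) hxy fun c hc => ?_⟩
  · rw [mul_addHaar_ball_of_pow_mul_eq volume hκ]
    gcongr
    exact hbefore c ⟨hx.1.trans_lt hc.1, hc.2.trans_le hy.2⟩
  · rw [mul_addHaar_ball_of_pow_mul_eq volume hκ]
    gcongr
    exact hafter c ⟨hx.1.trans_lt hc.1, hc.2.trans_le hy.2⟩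

theorem pc_eq_smul_single (c : ℝ) : pc c = c • EuclideanSpace.single 0 1 := by
  ext i
  fin_cases i <;> simp [pc]

/-- For the weighted annulus measure `μ = W(R,Q,w)` with inner density
`a = w/(πR²)` less than the annulus density `b = (1-w)/(π(Q²-R²))`, and any `s > 0`, the
function `ν_s(c) = μ(B((c,0),s))` is unimodal on `[0,Q]`: there is `ω ∈ [0,Q]` such that
`ν_s` is non-decreasing on `[0,ω]` and non-increasing on `[ω,Q]`. -/
theorem weighted_annulus_nu_unimodal
    (R Q w a b : ℝ) (hR : 0 < R) (hRQ : R < Q) (hw0 : 0 < w) (hw1 : w < 1)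
    (ha : a = w / (Real.pi * R ^ 2))
    (hb : b = (1 - w) / (Real.pi * (Q ^ 2 - R ^ 2)))
    (hab : a < b)
    (μ : Measure (EuclideanSpace ℝ (Fin 2)))
    (hμ : μ = volume.withDensity (fun p =>
      if ‖p‖ < R then ENNReal.ofReal a else if ‖p‖ ≤ Q then ENNReal.ofReal b else 0))
    (s : ℝ) (hs : 0 < s)
    (ν : ℝ → ℝ) (hν : ∀ c, ν c = (μ (ball (pc c) s)).toReal) :
    ∃ ω ∈ Icc (0:ℝ) Q, MonotoneOn ν (Icc 0 ω) ∧ AntitoneOn ν (Icc ω Q) := by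
  obtain rfl : ν = fun c => (weightedAnnulus _ R Q a.toNNReal b.toNNReal).real
      (ball (c • EuclideanSpace.single 0 1 : EuclideanSpace ℝ (Fin 2)) s) := by
    funext c
    rw [hν, pc_eq_smul_single, hμ]
    rfl
  exact weighted_annulus_nu_unimodal_general (by simp) (by simp) hR hRQ.le
    (Real.toNNReal_mono hab.le) hs.le (hR.trans hRQ).le
end
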